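/- Every flag in X is K-equivalent to exactly one of the l flags F_1, …, F_l; that is, for every maximal isotropic flag F in ℂ^{2l} with dim(V_l ∩ U_l) ≡ l (mod 2) there is a unique i with 1 ≤ i ≤ l such that F = g·F_i for some g ∈ K. -/

import Mathlib

open Module Submodule

noncomputable section

/-- `stdVec n m` is the `m`-th standard basis vector of `ℂ^n` (1-indexed); `0` out of range. -/
def stdVec (n m : ℕ) : Fin n → ℂ :=
  if h : 1 ≤ m ∧ m ≤ n then Pi.single (⟨m - 1, by omega⟩ : Fin n) 1 else 0

/-- `stdSub n k` is the subspace `U_k = span(e_1, …, e_k)` of `ℂ^n`. -/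
def stdSub (n k : ℕ) : Submodule ℂ (Fin n → ℂ) :=
  span ℂ (stdVec n '' Set.Icc 1 k)

/-- The action of an invertible linear map of `ℂ^n` on a chain of subspaces. -/
def actFlag (n : ℕ) (g : (Fin n → ℂ) ≃ₗ[ℂ] (Fin n → ℂ))
    (V : ℕ → Submodule ℂ (Fin n → ℂ)) (k : ℕ) : Submodule ℂ (Fin n → ℂ) :=
  Submodule.map g.toLinearMap (V k)

/-- The orbit of the chain `V` under a set `B` of invertible linear maps. -/
def orbitOf (n : ℕ) (B : Set ((Fin n → ℂ) ≃ₗ[ℂ] (Fin n → ℂ)))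
    (V : ℕ → Submodule ℂ (Fin n → ℂ)) : Set (ℕ → Submodule ℂ (Fin n → ℂ)) :=
  {V' | ∃ b ∈ B, actFlag n b V = V'}

/-- The symmetric bilinear form `β(x,y) = ∑_{k=1}^n x_k y_{n+1-k}` on `ℂ^n`. -/
def betaF (n : ℕ) (x y : Fin n → ℂ) : ℂ := ∑ k : Fin n, x k * y k.rev

/-- `SO(n,ℂ)` for the form `β`. -/
def SOgrp (n : ℕ) : Set ((Fin n → ℂ) ≃ₗ[ℂ] (Fin n → ℂ)) :=
  {g | LinearMap.det g.toLinearMap = 1 ∧ ∀ x y, betaF n (g x) (g y) = betaF n x y}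

/-- A maximal isotropic flag `V 1 ⊂ ⋯ ⊂ V l` in `ℂ^n` (values pinned outside `1..l`
so that two flags are equal iff they agree in degrees `1, …, l`). -/
def IsIsoFlag (n l : ℕ) (V : ℕ → Submodule ℂ (Fin n → ℂ)) : Prop :=
  (∀ i, i ≤ l → finrank ℂ ↥(V i) = i) ∧ (∀ i, V i ≤ V (i + 1)) ∧ (∀ i, l ≤ i → V i = V l) ∧
    (∀ u ∈ V l, ∀ w ∈ V l, betaF n u w = 0)

/-- The isotropic flag `(v 1 ⊂ ⋯ ⊂ v l)` spanned by `v 1, …, v l`. -/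
def isoFlagOf (n l : ℕ) (v : ℕ → Fin n → ℂ) (k : ℕ) : Submodule ℂ (Fin n → ℂ) :=
  span ℂ (v '' Set.Icc 1 (min k l))

/-- `K = {g ∈ SO(2l) : g (e_l - e_{-l}) = e_l - e_{-l}}` (here `e_{-l} = e_{l+1}`),
a copy of `SO(2l-1)`. -/
def Keven (l : ℕ) : Set ((Fin (2 * l) → ℂ) ≃ₗ[ℂ] (Fin (2 * l) → ℂ)) :=
  {g | g ∈ SOgrp (2 * l) ∧
       g (stdVec (2 * l) l - stdVec (2 * l) (l + 1)) =
         stdVec (2 * l) l - stdVec (2 * l) (l + 1)}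

/-- `V'` lies in the `K`-orbit of `V`. -/
def InKEvenOrbit (l : ℕ) (V V' : ℕ → Submodule ℂ (Fin (2 * l) → ℂ)) : Prop :=
  ∃ g ∈ Keven l, actFlag (2 * l) g V = V'

/-- Membership in `X`: maximal isotropic flags of `ℂ^{2l}` with
`dim (V_l ∩ U_l) ≡ l (mod 2)`. -/
def InXEven (l : ℕ) (V : ℕ → Submodule ℂ (Fin (2 * l) → ℂ)) : Prop :=
  IsIsoFlag (2 * l) l V ∧ finrank ℂ ↥(V l ⊓ stdSub (2 * l) l) % 2 = l % 2

/-- `F_i = (e_1 ⊂ ⋯ ⊂ e_{i-1} ⊂ e_l ⊂ e_i ⊂ ⋯ ⊂ e_{l-1})` (`e_l` in position `i`). -/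
def repEVec (l i m : ℕ) : Fin (2 * l) → ℂ :=
  if m < i then stdVec (2 * l) m
  else if m = i then stdVec (2 * l) l
  else stdVec (2 * l) (m - 1)

def repEFlag (l i : ℕ) : ℕ → Submodule ℂ (Fin (2 * l) → ℂ) :=
  isoFlagOf (2 * l) l (repEVec l i)

/-!
Put `w = e_l - e_{-l}`, an anisotropic vector. The hyperplane `w^⊥` contains no Lagrangian subspace,
so every flag in `X` leaves it at some step `i`; this step is invariant under `K`, and for `F_i` it
is `i`. Conversely, two flags that leave `w^⊥` at the same step have adapted bases with equal inner
products with `w`, and Witt's extension theorem gives an isometry `g` that fixes `w` and carries one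
flag to the other. Its determinant is `1` by the parity condition, because `det g` is the sign
`(-1) ^ (dim L - dim (gL ∩ L))` for any Lagrangian subspace `L`.
-/

/-! ### Lagrangian subspaces and determinants of isometries -/

/-- `L` is a Lagrangian subspace of the bilinear space `(E, B)`: it equals its own orthogonal. -/
def IsLagrangian {K E : Type*} [Field K] [AddCommGroup E] [Module K E]
    (B : LinearMap.BilinForm K E) (L : Submodule K E) : Prop :=
  B.orthogonal L = L

section Lagrangian

variable {K E : Type*} [Field K] [AddCommGroup E] [Module K E]
  {B : LinearMap.BilinForm K E} {L M : Submodule K E}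

namespace IsLagrangian

lemma mem_iff (hL : IsLagrangian B L) {x : E} : x ∈ L ↔ ∀ y ∈ L, B y x = 0 := by
  conv_lhs => rw [← show B.orthogonal L = L from hL]
  exact LinearMap.BilinForm.mem_orthogonal_iff

lemma apply_eq_zero (hL : IsLagrangian B L) {x y : E} (hx : x ∈ L) (hy : y ∈ L) : B x y = 0 :=
  hL.mem_iff.mp hy x hx

lemma map (hL : IsLagrangian B L) (g : E ≃ₗ[K] E) (hg : B.IsOrthogonal g) :
    IsLagrangian B (L.map g.toLinearMap) := by
  ext x
  obtain ⟨x, rfl⟩ := g.surjective x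
  rw [LinearMap.BilinForm.mem_orthogonal_iff, mem_map_equiv, g.symm_apply_apply, hL.mem_iff]
  simp only [mem_map, forall_exists_index, and_imp, forall_apply_eq_imp_iff₂,
    LinearEquiv.coe_coe, hg _ _]

lemma not_le_ker (hL : IsLagrangian B L) (hB : B.IsSymm) {w : E} (hw : B w w ≠ 0) :
    ¬ L ≤ LinearMap.ker (B w) := fun hle ↦
  hw (hle (hL.mem_iff.mpr fun y hy ↦ (hB.eq y w).trans (hle hy)))

variable [FiniteDimensional K E]

lemma two_mul_finrank (hL : IsLagrangian B L) (hB : B.Nondegenerate) :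
    2 * finrank K L = finrank K E := by
  have hsub := LinearMap.BilinForm.finrank_orthogonal hB L
  rw [show B.orthogonal L = L from hL] at hsub
  have := L.finrank_le
  lia

end IsLagrangian

lemma isLagrangian_of_two_mul_finrank [FiniteDimensional K E] (hB : B.Nondegenerate)
    (hiso : ∀ x ∈ L, ∀ y ∈ L, B x y = 0) (hdim : 2 * finrank K L = finrank K E) :
    IsLagrangian B L := by
  have hle : L ≤ B.orthogonal L := fun y hy ↦
    LinearMap.BilinForm.mem_orthogonal_iff.mpr fun x hx ↦ hiso x hx y hy
  refine (eq_of_le_of_finrank_eq hle ?_).symm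
  rw [LinearMap.BilinForm.finrank_orthogonal hB]
  lia

/-- The form identifies `E ⧸ L` with the dual of `L`, and the map induced by `g` on the quotient
with the inverse transpose of `g` on `L`, so the two determinants cancel. -/
lemma IsLagrangian.det_eq_one_of_le_comap [FiniteDimensional K E] (hL : IsLagrangian B L)
    (hB : B.Nondegenerate) {g : E →ₗ[K] E} (hg : B.IsOrthogonal g) (hgL : L ≤ L.comap g) :
    LinearMap.det g = 1 := by
  let φ : E →ₗ[K] Dual K L := L.subtype.dualMap ∘ₗ B.flip
  have hker : LinearMap.ker φ = L := by
    ext x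
    simp [φ, LinearMap.ext_iff, hL.mem_iff (x := x)]
  let e : (E ⧸ L) →ₗ[K] Dual K L := L.liftQ φ hker.ge
  have he_inj : Function.Injective e :=
    LinearMap.ker_eq_bot.mp (ker_liftQ_eq_bot L φ hker.ge hker.le)
  have hdim : finrank K (E ⧸ L) = finrank K (Dual K L) := by
    have hLE := hL.two_mul_finrank hB
    have hquot := L.finrank_quotient_add_finrank
    rw [Subspace.dual_finrank_eq]
    lia
  let e' : (E ⧸ L) ≃ₗ[K] Dual K L := LinearEquiv.ofInjectiveOfFinrankEq e he_inj hdim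
  have htranspose : (g.restrict hgL).dualMap ∘ₗ
      (e'.toLinearMap ∘ₗ L.mapQ L g hgL ∘ₗ e'.symm.toLinearMap) = LinearMap.id := by
    suffices (g.restrict hgL).dualMap ∘ₗ e ∘ₗ L.mapQ L g hgL = e by
      refine LinearMap.ext fun f ↦ ?_
      obtain ⟨q, rfl⟩ := e'.surjective f
      simp only [LinearMap.comp_apply, LinearEquiv.coe_coe, LinearEquiv.symm_apply_apply]
      exact congr($this q)
    ext x y
    exact hg y x
  rw [LinearMap.det_eq_det_mul_det L g hgL, ← LinearMap.det_dualMap (g.restrict hgL),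
    ← LinearMap.det_conj (L.mapQ L g hgL) e', ← LinearMap.det_comp, htranspose, LinearMap.det_id]

lemma det_reflection [FiniteDimensional K E] {f : Dual K E} {x : E} (h : f x = 2) :
    LinearMap.det (Module.reflection h).toLinearMap = -1 := by
  have : (Module.reflection h).toLinearMap = LinearMap.transvection (-f) x := by
    ext y
    simp [Module.reflection_apply, LinearMap.transvection.apply, sub_eq_add_neg]
  rw [this, LinearMap.transvection.det, LinearMap.neg_apply, h]
  norm_num

lemma isOrthogonal_reflection (hB : B.IsSymm) {r : E} (hr : B r r = 2) :
    B.IsOrthogonal (Module.reflection hr) := by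
  intro x y
  simp only [Module.reflection_apply, map_sub, map_smul, LinearMap.sub_apply, LinearMap.smul_apply,
    smul_eq_mul, hr, hB.eq x r]
  ring

lemma map_reflection_inf (hL : IsLagrangian B L) (hM : IsLagrangian B M)
    {u v : E} (hu : u ∈ L) (hv : v ∈ M) (huv : B u v = -1) (hr : B (u - v) (u - v) = 2) :
    M.map (Module.reflection hr).toLinearMap ⊓ L = (M ⊓ L) ⊔ span K {u} := by
  apply le_antisymm
  · rintro _ ⟨⟨y, hy, rfl⟩, hyL⟩
    set c := B (u - v) y
    have hsy : Module.reflection hr y = y - c • (u - v) := Module.reflection_apply _ hr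
    have hmem : y + c • v ∈ M ⊓ L := by
      have heq : y + c • v = Module.reflection hr y + c • u := by
        rw [hsy]
        module
      exact ⟨M.add_mem hy (M.smul_mem c hv), heq ▸ L.add_mem hyL (L.smul_mem c hu)⟩
    refine mem_sup.mpr ⟨_, hmem, -c • u, smul_mem _ _ (mem_span_singleton_self u), ?_⟩
    change _ = Module.reflection hr y
    rw [hsy]
    module
  · refine sup_le (fun x hx ↦ ⟨⟨x, hx.1, ?_⟩, hx.2⟩)
      ((span_singleton_le_iff_mem _ _).mpr ⟨⟨v, hv, ?_⟩, hu⟩)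
    · simp [Module.reflection_apply, hL.apply_eq_zero hu hx.2, hM.apply_eq_zero hv hx.1]
    · simp [Module.reflection_apply, huv, hM.apply_eq_zero hv hv]

lemma exists_isOrthogonal_finrank_map_inf_eq_succ [FiniteDimensional K E] (hB : B.IsSymm)
    (hL : IsLagrangian B L) (hM : IsLagrangian B M) (hLM : ¬ L ≤ M) :
    ∃ s : E ≃ₗ[K] E, B.IsOrthogonal s ∧ LinearMap.det s.toLinearMap = -1 ∧
      finrank K ↥(M.map s.toLinearMap ⊓ L) = finrank K ↥(M ⊓ L) + 1 := by
  obtain ⟨u, hu, huM⟩ := SetLike.not_le_iff_exists.mp hLM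
  obtain ⟨v, hv, huv⟩ : ∃ v ∈ M, B u v = -1 := by
    rw [hM.mem_iff] at huM
    push Not at huM
    obtain ⟨v, hv, hvu⟩ := huM
    exact ⟨-(B v u)⁻¹ • v, M.smul_mem _ hv, by simp [hB.eq u v, hvu]⟩
  have hr : B (u - v) (u - v) = 2 := by
    simp only [map_sub, LinearMap.sub_apply, hL.apply_eq_zero hu hu, hM.apply_eq_zero hv hv, huv,
      hB.eq v u]
    norm_num
  refine ⟨Module.reflection hr, isOrthogonal_reflection hB hr, det_reflection hr, ?_⟩
  rw [map_reflection_inf hL hM hu hv huv hr]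
  exact finrank_sup_span_singleton fun h ↦ huM h.1

/-- Both sides change sign under a reflection that increases `dim (gL ∩ L)`, so we may take
`gL = L`. -/
theorem IsLagrangian.det_eq_neg_one_pow [FiniteDimensional K E] (hL : IsLagrangian B L)
    (hB : B.IsSymm) (hB' : B.Nondegenerate) (g : E ≃ₗ[K] E) (hg : B.IsOrthogonal g) :
    LinearMap.det g.toLinearMap = (-1) ^ (finrank K L + finrank K ↥(L.map g.toLinearMap ⊓ L)) := by
  induction hn : finrank K L - finrank K ↥(L.map g.toLinearMap ⊓ L) generalizing g with
  | zero =>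
    have hle : L ≤ L.map g.toLinearMap :=
      inf_eq_right.mp (eq_of_le_of_finrank_le inf_le_right (by lia))
    have heq : L.map g.toLinearMap = L :=
      (eq_of_le_of_finrank_eq hle (LinearEquiv.finrank_map_eq g L).symm).symm
    rw [hL.det_eq_one_of_le_comap hB' hg (map_le_iff_le_comap.mp heq.le), heq, inf_idem,
      Even.neg_one_pow ⟨_, rfl⟩]
  | succ n ih =>
    have hnot : ¬ L ≤ L.map g.toLinearMap := fun hle ↦ by
      rw [inf_eq_right.mpr hle] at hn
      lia
    obtain ⟨s, hs, hdet, hfin⟩ :=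
      exists_isOrthogonal_finrank_map_inf_eq_succ hB hL (hL.map g hg) hnot
    have hmap : L.map (g.trans s).toLinearMap = (L.map g.toLinearMap).map s.toLinearMap :=
      map_comp _ _ _
    have key := ih (g.trans s) (fun x y ↦ (hs _ _).trans (hg x y)) (by rw [hmap, hfin]; lia)
    rw [hmap, hfin, LinearEquiv.coe_trans, LinearMap.det_comp, hdet, ← add_assoc, pow_succ] at key
    linear_combination -key

end Lagrangian

/-! ### Witt extension from Lagrangian subspaces -/

section Witt

variable {K E ι : Type*} [Field K] [AddCommGroup E] [Module K E]
  {B : LinearMap.BilinForm K E} {L L' : Submodule K E}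

/-- The vectors `c (inl i)`, `c (inr i)` form hyperbolic pairs: each is isotropic, the two vectors
of a pair are `B`-dual to each other, and distinct pairs are orthogonal. -/
def IsHyperbolic [DecidableEq ι] (B : LinearMap.BilinForm K E) (c : ι ⊕ ι → E) : Prop :=
  ∀ s t, B (c s) (c t) = if s = t.swap then 1 else 0

lemma IsHyperbolic.linearIndependent [DecidableEq ι] {c : ι ⊕ ι → E} (hc : IsHyperbolic B c) :
    LinearIndependent K c := by
  refine LinearIndependent.of_pairwise_dual_eq_zero_one c (fun s ↦ B (c s.swap))
    (fun s t hst ↦ ?_) fun s ↦ ?_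
  · simp [hc _ _, Sum.swap_leftInverse.injective.eq_iff, hst]
  · simp [hc _ _]

lemma exists_bilinForm_apply_eq_ite [FiniteDimensional K E] [DecidableEq ι]
    (hB' : B.Nondegenerate) {a : ι → E} (ha : LinearIndependent K a) :
    ∃ d : ι → E, ∀ i j, B (d i) (a j) = if i = j then 1 else 0 := by
  have hdual (i : ι) : ∃ x, ∀ j, B x (a j) = if i = j then 1 else 0 := by
    obtain ⟨f, hf⟩ := LinearMap.exists_extend ((Basis.span ha).coord i)
    refine ⟨(B.toDual hB').symm f, fun j ↦ ?_⟩
    have hfj := congr($hf (Basis.span ha j))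
    rw [LinearMap.comp_apply, subtype_apply, Basis.span_apply] at hfj
    rw [LinearMap.BilinForm.apply_toDual_symm_apply, hfj, ← Basis.span_apply ha, Basis.coord_apply,
      Basis.repr_self, Finsupp.single_apply]
    simp only [eq_comm]
  choose d hd using hdual
  exact ⟨d, hd⟩

lemma exists_isHyperbolic [FiniteDimensional K E] [NeZero (2 : K)] [Finite ι] [DecidableEq ι]
    (hB : B.IsSymm) (hB' : B.Nondegenerate) {a : ι → E} (ha : LinearIndependent K a)
    (hiso : ∀ i j, B (a i) (a j) = 0) :
    ∃ b : ι → E, IsHyperbolic B (Sum.elim a b) := by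
  have := Fintype.ofFinite ι
  obtain ⟨d, hd⟩ := exists_bilinForm_apply_eq_ite hB' ha
  have hd' (i j : ι) : B (a i) (d j) = if j = i then 1 else 0 := by rw [← hB.eq, hd]
  -- Subtracting half of the Gram matrix makes the dual family isotropic.
  refine ⟨fun i ↦ d i - (2 : K)⁻¹ • ∑ k, B (d i) (d k) • a k, ?_⟩
  rintro (i | i) (j | j)
  · simp [hiso]
  · simp [hiso, hd', eq_comm]
  · simp [hiso, hd]
  · have h2 : (2 : K)⁻¹ + 2⁻¹ = 1 := by rw [← two_mul, mul_inv_cancel₀ two_ne_zero]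
    simp only [Sum.elim_inr, map_sub, map_smul, map_sum, LinearMap.sub_apply, LinearMap.smul_apply,
      LinearMap.sum_apply, smul_eq_mul, hd, hd', hiso, ← hB.eq (d i) (d j), mul_ite, mul_one,
      mul_zero, Finset.sum_ite_eq, Finset.mem_univ, Finset.sum_const_zero, ↓reduceIte, sub_zero,
      Sum.swap_inr, reduceCtorEq]
    linear_combination -B (d i) (d j) * h2

lemma exists_basis_isHyperbolic [FiniteDimensional K E] [NeZero (2 : K)] [Finite ι]
    [DecidableEq ι] (hB : B.IsSymm) (hB' : B.Nondegenerate) (hL : IsLagrangian B L)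
    {a : ι → E} (ha : LinearIndependent K a) (haL : span K (Set.range a) = L) :
    ∃ c : Basis (ι ⊕ ι) K E, IsHyperbolic B c ∧ ∀ i, c (.inl i) = a i := by
  have := Fintype.ofFinite ι
  have hmem (i : ι) : a i ∈ L := haL ▸ subset_span (Set.mem_range_self i)
  obtain ⟨b, hb⟩ :=
    exists_isHyperbolic hB hB' ha fun i j ↦ hL.apply_eq_zero (hmem i) (hmem j)
  have hcard : Fintype.card (ι ⊕ ι) = finrank K E := by
    rw [← hL.two_mul_finrank hB', ← haL, finrank_span_eq_card ha, Fintype.card_sum, two_mul]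
  exact ⟨basisOfLinearIndependentOfCardEqFinrank' _ hb.linearIndependent hcard, by simpa using hb,
    by simp⟩

lemma isOrthogonal_basisEquiv [DecidableEq ι] {c c' : Basis (ι ⊕ ι) K E} (hc : IsHyperbolic B c)
    (hc' : IsHyperbolic B c') : B.IsOrthogonal (c.equiv c' (Equiv.refl _)) := by
  let e := (c.equiv c' (Equiv.refl _)).toLinearMap
  have : B.compl₁₂ e e = B := LinearMap.BilinForm.ext_basis c fun s t ↦ by
    simp [e, hc s t, hc' s t]
  exact fun x y ↦ congr($this x y)

lemma exists_isOrthogonal_apply_eq [FiniteDimensional K E] [NeZero (2 : K)] [Finite ι]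
    (hB : B.IsSymm) (hB' : B.Nondegenerate) (hL : IsLagrangian B L) (hL' : IsLagrangian B L')
    {a a' : ι → E} (ha : LinearIndependent K a) (haL : span K (Set.range a) = L)
    (ha' : LinearIndependent K a') (haL' : span K (Set.range a') = L') :
    ∃ g : E ≃ₗ[K] E, B.IsOrthogonal g ∧ ∀ i, g (a i) = a' i := by
  classical
  obtain ⟨c, hc, hca⟩ := exists_basis_isHyperbolic hB hB' hL ha haL
  obtain ⟨c', hc', hca'⟩ := exists_basis_isHyperbolic hB hB' hL' ha' haL'
  exact ⟨_, isOrthogonal_basisEquiv hc hc', fun i ↦ by rw [← hca, ← hca', Basis.equiv_apply]; rfl⟩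

/-- The map `x ↦ x - B u x • y + B y x • u` is known as an Eichler transformation. -/
lemma exists_isOrthogonal_eichler (hB : B.IsSymm) {u y : E} (huu : B u u = 0) (hyy : B y y = 0)
    (huy : B u y = 0) :
    ∃ g : E ≃ₗ[K] E, B.IsOrthogonal g ∧ ∀ x, g x = x - B u x • y + B y x • u := by
  have hyu : B y u = 0 := (hB.eq _ _).trans huy
  let g := (LinearEquiv.transvection (f := -B u) (v := y) (by simp [huy])).trans
    (LinearEquiv.transvection (f := B y) (v := u) hyu)
  have hg (x : E) : g x = x - B u x • y + B y x • u := by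
    simp [g, LinearMap.transvection.apply, hyy, sub_eq_add_neg]
  refine ⟨g, fun x x' ↦ ?_, hg⟩
  simp only [hg, map_add, map_sub, map_smul, LinearMap.add_apply, LinearMap.sub_apply,
    LinearMap.smul_apply, smul_eq_mul, huu, hyy, huy, hyu, hB.eq x u, hB.eq x y]
  ring

lemma exists_isOrthogonal_add_apply_eq (hB : B.IsSymm) (hL : IsLagrangian B L) {w y : E}
    (hw : B w w ≠ 0) (hy : y ∈ L) (hwy : B w y = 0) :
    ∃ g : E ≃ₗ[K] E, B.IsOrthogonal g ∧ (∀ x ∈ L, g x = x) ∧ g (w + y) = w := by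
  obtain ⟨v, hv, hwv⟩ := SetLike.not_le_iff_exists.mp (hL.not_le_ker hB hw)
  have hu : (B w v)⁻¹ • v ∈ L := L.smul_mem _ hv
  have hwu : B w ((B w v)⁻¹ • v) = 1 := by
    rw [map_smul, smul_eq_mul, inv_mul_cancel₀ hwv]
  obtain ⟨g, hg, hgx⟩ := exists_isOrthogonal_eichler hB (hL.apply_eq_zero hu hu)
    (hL.apply_eq_zero hy hy) (hL.apply_eq_zero hu hy)
  refine ⟨g, hg, fun x hx ↦ ?_, ?_⟩
  · simp only [hgx, hL.apply_eq_zero hu hx, hL.apply_eq_zero hy hx, zero_smul, sub_zero, add_zero]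
  · rw [hgx, map_add, map_add, hL.apply_eq_zero hu hy, hL.apply_eq_zero hy hy, ← hB.eq w, hwu,
      ← hB.eq w, hwy]
    simp

/-- A case of Witt's extension theorem. -/
theorem exists_isOrthogonal_apply_eq_of_not_isotropic [FiniteDimensional K E] [NeZero (2 : K)]
    [Finite ι] (hB : B.IsSymm) (hB' : B.Nondegenerate) (hL : IsLagrangian B L)
    (hL' : IsLagrangian B L') {a a' : ι → E} (ha : LinearIndependent K a)
    (haL : span K (Set.range a) = L) (ha' : LinearIndependent K a')
    (haL' : span K (Set.range a') = L') {w w' : E} (hw' : B w' w' ≠ 0) (hww : B w w = B w' w')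
    (hwa : ∀ i, B w (a i) = B w' (a' i)) :
    ∃ g : E ≃ₗ[K] E, B.IsOrthogonal g ∧ (∀ i, g (a i) = a' i) ∧ g w = w' := by
  obtain ⟨g₀, hg₀, hg₀a⟩ := exists_isOrthogonal_apply_eq hB hB' hL hL' ha haL ha' haL'
  have hmem (i : ι) : a' i ∈ L' := haL' ▸ subset_span (Set.mem_range_self i)
  have hy : g₀ w - w' ∈ L' := by
    refine hL'.mem_iff.mpr fun x hx ↦ ?_
    suffices L' ≤ LinearMap.ker (B (g₀ w - w')) from (hB.eq _ _).trans (this hx)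
    rw [← haL', span_le]
    rintro _ ⟨i, rfl⟩
    simp [← hg₀a, hg₀ w (a i), hwa i]
  have hwy : B w' (g₀ w - w') = 0 := by
    have hyy := hL'.apply_eq_zero hy hy
    simp only [map_sub, LinearMap.sub_apply, hg₀ w w, hww, hB.eq w' (g₀ w)] at hyy
    refine (mul_eq_zero_iff_left (two_ne_zero (α := K))).mp ?_
    rw [map_sub, hB.eq w' (g₀ w)]
    linear_combination -hyy
  obtain ⟨g₁, hg₁, hg₁L, hg₁w⟩ := exists_isOrthogonal_add_apply_eq hB hL' hw' hy hwy
  refine ⟨g₀.trans g₁, fun x y ↦ (hg₁ _ _).trans (hg₀ x y), fun i ↦ ?_, ?_⟩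
  · rw [LinearEquiv.trans_apply, hg₀a, hg₁L _ (hmem i)]
  · rwa [add_sub_cancel] at hg₁w

end Witt

/-! ### Flags of Lagrangian subspaces -/

section Flag

variable {K E : Type*} [Field K] [AddCommGroup E] [Module K E]

lemma exists_mem_notMem_apply_eq_ite {W W' : Submodule K E} (hlt : W < W') (f : Dual K E)
    [Decidable (W ≤ LinearMap.ker f ∧ ¬ W' ≤ LinearMap.ker f)] :
    ∃ v ∈ W', v ∉ W ∧ f v = if W ≤ LinearMap.ker f ∧ ¬ W' ≤ LinearMap.ker f then 1 else 0 := by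
  obtain ⟨v, hv, hvW⟩ := SetLike.exists_of_lt hlt
  split_ifs with h
  · obtain ⟨u, hu, hfu⟩ := SetLike.not_le_iff_exists.mp h.2
    have hfu' : f ((f u)⁻¹ • u) = 1 := by rw [map_smul, smul_eq_mul, inv_mul_cancel₀ hfu]
    exact ⟨_, W'.smul_mem _ hu, fun hmem ↦ one_ne_zero (hfu'.symm.trans (h.1 hmem)), hfu'⟩
  · by_cases hW : W ≤ LinearMap.ker f
    · exact ⟨v, hv, hvW, of_not_not fun hfv ↦ h ⟨hW, fun hle ↦ hfv (hle hv)⟩⟩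
    · obtain ⟨u, hu, hfu⟩ := SetLike.not_le_iff_exists.mp hW
      refine ⟨v - (f v / f u) • u, W'.sub_mem hv (W'.smul_mem _ (hlt.le hu)), fun hmem ↦ hvW ?_, ?_⟩
      · rwa [W.sub_mem_iff_left (W.smul_mem _ hu)] at hmem
      · rw [map_sub, map_smul, smul_eq_mul, div_mul_cancel₀ _ hfu, sub_self]

lemma map_le_ker_iff {B : LinearMap.BilinForm K E} {g : E ≃ₗ[K] E} (hg : B.IsOrthogonal g) {w : E}
    (hgw : g w = w) {W : Submodule K E} :
    W.map g.toLinearMap ≤ LinearMap.ker (B w) ↔ W ≤ LinearMap.ker (B w) := by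
  have hcomp : B w ∘ₗ g.toLinearMap = B w := by
    ext x
    simpa [hgw] using hg w x
  rw [map_le_iff_le_comap, ← LinearMap.ker_comp, hcomp]

/-- The subspaces `V 0 ⊂ V 1 ⊂ ⋯ ⊂ V l` form a complete flag of the Lagrangian subspace `V l`;
no condition is put on `V k` for `l < k`. -/
structure IsLagrangianFlag (B : LinearMap.BilinForm K E) (l : ℕ) (V : ℕ → Submodule K E) :
    Prop where
  finrank_eq : ∀ k ≤ l, finrank K (V k) = k
  le_succ : ∀ k < l, V k ≤ V (k + 1)
  isLagrangian : IsLagrangian B (V l)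

namespace IsLagrangianFlag

variable {B : LinearMap.BilinForm K E} {l : ℕ} {V V' : ℕ → Submodule K E}

lemma zero_eq_bot [FiniteDimensional K E] (hV : IsLagrangianFlag B l V) : V 0 = ⊥ :=
  finrank_eq_zero.mp (hV.finrank_eq 0 l.zero_le)

lemma mono (hV : IsLagrangianFlag B l V) {j k : ℕ} (hjk : j ≤ k) (hk : k ≤ l) : V j ≤ V k := by
  induction k, hjk using Nat.le_induction with
  | base => rfl
  | succ k _ ih => exact (ih (by lia)).trans (hV.le_succ k hk)

lemma lt_succ (hV : IsLagrangianFlag B l V) {k : ℕ} (hk : k < l) : V k < V (k + 1) := by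
  refine (hV.le_succ k hk).lt_of_ne fun h ↦ ?_
  have := hV.finrank_eq (k + 1) hk
  rw [← h, hV.finrank_eq k hk.le] at this
  lia

open Classical in
/-- The normalized values of `f` depend only on the step at which the flag leaves the kernel of
`f`. -/
lemma exists_span_image_Iio_eq [FiniteDimensional K E] (hV : IsLagrangianFlag B l V)
    (f : Dual K E) :
    ∃ v : ℕ → E, (∀ k ≤ l, span K (v '' Set.Iio k) = V k) ∧ ∀ k < l, f (v k) =
      if V k ≤ LinearMap.ker f ∧ ¬ V (k + 1) ≤ LinearMap.ker f then 1 else 0 := by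
  have hstep (k : ℕ) : ∃ v, k < l → v ∈ V (k + 1) ∧ v ∉ V k ∧
      f v = if V k ≤ LinearMap.ker f ∧ ¬ V (k + 1) ≤ LinearMap.ker f then 1 else 0 := by
    by_cases hk : k < l
    · obtain ⟨v, hv⟩ := exists_mem_notMem_apply_eq_ite (hV.lt_succ hk) f
      exact ⟨v, fun _ ↦ hv⟩
    · exact ⟨0, fun h ↦ absurd h hk⟩
  choose v hv using hstep
  refine ⟨v, fun k ↦ ?_, fun k hk ↦ (hv k hk).2.2⟩
  induction k with
  | zero => simp [hV.zero_eq_bot]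
  | succ k ih =>
    intro hk
    obtain ⟨hmem, hnotMem, -⟩ := hv k hk
    rw [Set.Iio_add_one_eq_Iic, ← Set.Iio_insert, Set.image_insert_eq, span_insert, sup_comm,
      ih (by lia)]
    refine eq_of_le_of_finrank_eq
      (sup_le (hV.le_succ k hk) ((span_singleton_le_iff_mem _ _).mpr hmem)) ?_
    rw [finrank_sup_span_singleton hnotMem, hV.finrank_eq k (by lia), hV.finrank_eq (k + 1) hk]

lemma linearIndependent_of_span_eq (hV : IsLagrangianFlag B l V) {v : ℕ → E}
    (hv : span K (v '' Set.Iio l) = V l) : LinearIndependent K fun k : Set.Iio l ↦ v k := by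
  rw [linearIndependent_iff_card_eq_finrank_span, Set.finrank, ← Set.image_eq_range, hv,
    hV.finrank_eq l le_rfl]
  simp

theorem exists_isOrthogonal_map_eq [FiniteDimensional K E] [NeZero (2 : K)] (hB : B.IsSymm)
    (hB' : B.Nondegenerate) (hV : IsLagrangianFlag B l V) (hV' : IsLagrangianFlag B l V') {w : E}
    (hw : B w w ≠ 0)
    (hker : ∀ k ≤ l, V k ≤ LinearMap.ker (B w) ↔ V' k ≤ LinearMap.ker (B w)) :
    ∃ g : E ≃ₗ[K] E, B.IsOrthogonal g ∧ g w = w ∧ ∀ k ≤ l, (V k).map g.toLinearMap = V' k := by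
  obtain ⟨v, hv, hwv⟩ := hV.exists_span_image_Iio_eq (B w)
  obtain ⟨v', hv', hwv'⟩ := hV'.exists_span_image_Iio_eq (B w)
  have hpair (k : Set.Iio l) : B w (v k) = B w (v' k) := by
    have hk : (k : ℕ) < l := k.2
    rw [hwv k hk, hwv' k hk, hker k hk.le, hker (k + 1) hk]
  obtain ⟨g, hg, hgv, hgw⟩ := exists_isOrthogonal_apply_eq_of_not_isotropic hB hB' hV.isLagrangian
    hV'.isLagrangian (hV.linearIndependent_of_span_eq (hv l le_rfl))
    (by rw [← Set.image_eq_range, hv l le_rfl]) (hV'.linearIndependent_of_span_eq (hv' l le_rfl))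
    (by rw [← Set.image_eq_range, hv' l le_rfl]) hw rfl hpair
  refine ⟨g, hg, hgw, fun k hk ↦ ?_⟩
  rw [← hv k hk, ← hv' k hk, map_span, ← Set.image_comp]
  congr 1
  exact Set.image_congr fun j hj ↦ hgv ⟨j, lt_of_lt_of_le hj hk⟩

theorem existsUnique_le_ker_iff_lt [FiniteDimensional K E] (hB : B.IsSymm)
    (hV : IsLagrangianFlag B l V) {w : E} (hw : B w w ≠ 0) :
    ∃! i, (1 ≤ i ∧ i ≤ l) ∧ ∀ k ≤ l, V k ≤ LinearMap.ker (B w) ↔ k < i := by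
  classical
  have hex : ∃ k, ¬ V k ≤ LinearMap.ker (B w) := ⟨l, hV.isLagrangian.not_le_ker hB hw⟩
  have hzero : V 0 ≤ LinearMap.ker (B w) := hV.zero_eq_bot ▸ bot_le
  have hl : Nat.find hex ≤ l := Nat.find_min' hex (hV.isLagrangian.not_le_ker hB hw)
  refine ⟨Nat.find hex, ⟨⟨?_, hl⟩, fun k hk ↦ ⟨fun hle ↦ ?_, fun hlt ↦ ?_⟩⟩, fun i ⟨hi, hiV⟩ ↦ ?_⟩
  · exact (Nat.find_pos hex).mpr (not_not.mpr hzero)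
  · by_contra! hge
    exact Nat.find_spec hex ((hV.mono hge hk).trans hle)
  · exact of_not_not (Nat.find_min hex hlt)
  · apply le_antisymm
    · by_contra! hlt
      exact Nat.find_spec hex ((hiV _ hl).mpr hlt)
    · exact Nat.find_min' hex fun hle ↦ (hiV i hi.2).mp hle |>.false

end IsLagrangianFlag

end Flag

/-! ### The form `β` and the flags `F_i` -/

section SplitForm

/-- `betaF n` as a bilinear form. -/
def betaForm (n : ℕ) : LinearMap.BilinForm ℂ (Fin n → ℂ) :=
  LinearMap.mk₂ ℂ (betaF n)
    (fun x x' y ↦ by simp only [betaF, Pi.add_apply, add_mul, Finset.sum_add_distrib])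
    (fun c x y ↦ by simp only [betaF, Pi.smul_apply, smul_eq_mul, mul_assoc, Finset.mul_sum])
    (fun x y y' ↦ by simp only [betaF, Pi.add_apply, mul_add, Finset.sum_add_distrib])
    (fun c x y ↦ by
      simp only [betaF, Pi.smul_apply, smul_eq_mul, mul_left_comm _ c, Finset.mul_sum])

lemma betaForm_apply (n : ℕ) (x y : Fin n → ℂ) : betaForm n x y = betaF n x y := rfl

lemma isSymm_betaForm (n : ℕ) : (betaForm n).IsSymm :=
  ⟨fun x y ↦ Fintype.sum_equiv Fin.revPerm _ _ fun k ↦ by simp [mul_comm]⟩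

lemma nondegenerate_betaForm (n : ℕ) : (betaForm n).Nondegenerate := by
  refine (isSymm_betaForm n).isRefl.nondegenerate_iff_separatingLeft.mpr fun x hx ↦ ?_
  ext k
  have hxk := hx (Pi.single k.rev 1)
  simpa [betaForm_apply, betaF, Pi.single_apply, Fin.rev_inj] using hxk

lemma stdVec_apply (n m : ℕ) (k : Fin n) : stdVec n m k = if (k : ℕ) + 1 = m then 1 else 0 := by
  unfold stdVec
  split_ifs with h h' h'
  · simp [← h']
  · exact Pi.single_eq_of_ne (fun hk ↦ h' (by rw [hk, Nat.sub_add_cancel h.1])) _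
  · lia
  · rfl

lemma betaForm_stdVec_stdVec {n a : ℕ} (ha : 1 ≤ a) (han : a ≤ n) (b : ℕ) :
    betaForm n (stdVec n a) (stdVec n b) = if a + b = n + 1 then 1 else 0 := by
  rw [betaForm_apply, betaF, Finset.sum_eq_single ⟨a - 1, by lia⟩]
  · simp only [stdVec_apply, Fin.val_rev, mul_ite, mul_one, mul_zero]
    grind
  · intro k _ hk
    simp only [stdVec_apply, mul_ite, mul_one, mul_zero]
    grind
  · simp

lemma linearIndepOn_stdVec (n : ℕ) : LinearIndepOn ℂ (stdVec n) (Set.Icc 1 n) := by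
  refine LinearIndependent.of_pairwise_dual_eq_zero_one _
    (fun m : Set.Icc 1 n ↦ betaForm n (stdVec n (n + 1 - m))) (fun i j hij ↦ ?_) fun i ↦ ?_
  · obtain ⟨hi, hin⟩ := i.2
    rw [betaForm_stdVec_stdVec (by lia) (by lia), if_neg fun h ↦ hij (Subtype.ext (by lia))]
  · obtain ⟨hi, hin⟩ := i.2
    rw [betaForm_stdVec_stdVec (by lia) (by lia), if_pos (by lia)]

lemma finrank_span_stdVec_image {n : ℕ} {s : Set ℕ} (hs : s ⊆ Set.Icc 1 n) :
    finrank ℂ (span ℂ (stdVec n '' s)) = s.ncard := by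
  have hli := (linearIndepOn_stdVec n).mono hs
  have := ((Set.finite_Icc 1 n).subset hs).fintype
  rw [Set.image_eq_range, finrank_span_eq_card hli, Set.ncard_eq_toFinset_card', Set.toFinset_card]

lemma finrank_stdSub {n k : ℕ} (hk : k ≤ n) : finrank ℂ (stdSub n k) = k := by
  rw [stdSub, finrank_span_stdVec_image (Set.Icc_subset_Icc_right hk), Set.ncard_eq_toFinset_card']
  simp

lemma isLagrangian_stdSub (l : ℕ) : IsLagrangian (betaForm (2 * l)) (stdSub (2 * l) l) := by
  refine isLagrangian_of_two_mul_finrank (nondegenerate_betaForm _) (fun x hx y hy ↦ ?_) ?_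
  · induction hx, hy using span_induction₂ with
    | mem_mem x y hx hy =>
      obtain ⟨a, ⟨ha, hal⟩, rfl⟩ := hx
      obtain ⟨b, ⟨-, hbl⟩, rfl⟩ := hy
      rw [betaForm_stdVec_stdVec ha (by lia), if_neg (by lia)]
    | _ => simp_all
  · rw [finrank_stdSub (by lia), finrank_fin_fun]

/-- The vector `e_l - e_{-l}` whose stabilizer in `SO(2l)` is `K`. -/
def fixedVec (l : ℕ) : Fin (2 * l) → ℂ := stdVec (2 * l) l - stdVec (2 * l) (l + 1)

variable {l : ℕ}

lemma betaForm_fixedVec_stdVec (hl : 1 ≤ l) {m : ℕ} (hm : m ≤ l) :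
    betaForm (2 * l) (fixedVec l) (stdVec (2 * l) m) = if m = l then -1 else 0 := by
  rw [fixedVec, map_sub, LinearMap.sub_apply, betaForm_stdVec_stdVec hl (by lia),
    betaForm_stdVec_stdVec (by lia) (by lia)]
  grind

lemma betaForm_fixedVec_self (hl : 1 ≤ l) : betaForm (2 * l) (fixedVec l) (fixedVec l) = -2 := by
  simp only [fixedVec, map_sub, LinearMap.sub_apply]
  rw [betaForm_stdVec_stdVec hl (by lia), betaForm_stdVec_stdVec hl (by lia),
    betaForm_stdVec_stdVec (by lia) (by lia), betaForm_stdVec_stdVec (by lia) (by lia)]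
  grind

end SplitForm

section EvenOrthogonal

variable {l i k : ℕ} {V : ℕ → Submodule ℂ (Fin (2 * l) → ℂ)}

/-- The index of the standard basis vector in position `m` of the frame of `F_i`. -/
def repIndex (l i m : ℕ) : ℕ := if m < i then m else if m = i then l else m - 1

lemma repEVec_eq_stdVec (l i : ℕ) : repEVec l i = stdVec (2 * l) ∘ repIndex l i := by
  ext1 m
  simp only [repEVec, repIndex, Function.comp_apply]
  split_ifs <;> rfl

lemma mapsTo_repIndex (hi : 1 ≤ i) (hil : i ≤ l) :
    Set.MapsTo (repIndex l i) (Set.Icc 1 l) (Set.Icc 1 l) := by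
  intro m hm
  grind [repIndex]

lemma injOn_repIndex (hil : i ≤ l) : Set.InjOn (repIndex l i) (Set.Icc 1 l) := by
  intro m hm m' hm' h
  grind [repIndex]

lemma repEFlag_eq_span (l i k : ℕ) :
    repEFlag l i k = span ℂ (stdVec (2 * l) '' (repIndex l i '' Set.Icc 1 (min k l))) := by
  rw [repEFlag, isoFlagOf, repEVec_eq_stdVec, Set.image_comp]

lemma finrank_repEFlag (hi : 1 ≤ i) (hil : i ≤ l) (hk : k ≤ l) :
    finrank ℂ (repEFlag l i k) = k := by
  have hsub : Set.Icc 1 k ⊆ Set.Icc 1 l := Set.Icc_subset_Icc_right hk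
  have himage : repIndex l i '' Set.Icc 1 k ⊆ Set.Icc 1 (2 * l) :=
    ((mapsTo_repIndex hi hil).mono hsub (Set.Icc_subset_Icc_right (by lia))).image_subset
  rw [repEFlag_eq_span, min_eq_left hk, finrank_span_stdVec_image himage,
    ((injOn_repIndex hil).mono hsub).ncard_image, Set.ncard_eq_toFinset_card']
  simp

lemma repEFlag_self (hi : 1 ≤ i) (hil : i ≤ l) : repEFlag l i l = stdSub (2 * l) l := by
  refine eq_of_le_of_finrank_eq ?_ ?_
  · rw [repEFlag_eq_span, min_self]
    exact span_mono (Set.image_mono (mapsTo_repIndex hi hil).image_subset)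
  · rw [finrank_repEFlag hi hil le_rfl, finrank_stdSub (by lia)]

lemma isLagrangianFlag_repEFlag (hi : 1 ≤ i) (hil : i ≤ l) :
    IsLagrangianFlag (betaForm (2 * l)) l (repEFlag l i) where
  finrank_eq _ hk := finrank_repEFlag hi hil hk
  le_succ _ _ := span_mono (Set.image_mono (Set.Icc_subset_Icc_right (by lia)))
  isLagrangian := repEFlag_self hi hil ▸ isLagrangian_stdSub l

lemma repEFlag_le_ker_iff (hi : 1 ≤ i) (hil : i ≤ l) (hk : k ≤ l) :
    repEFlag l i k ≤ LinearMap.ker (betaForm (2 * l) (fixedVec l)) ↔ k < i := by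
  rw [repEFlag, isoFlagOf, min_eq_left hk, span_le, Set.image_subset_iff]
  refine ⟨fun hker ↦ ?_, fun hki m ⟨_, hmk⟩ ↦ ?_⟩
  · by_contra! hik
    have hi_ker : betaForm (2 * l) (fixedVec l) (repEVec l i i) = 0 := hker ⟨hi, hik⟩
    simp [repEVec, betaForm_fixedVec_stdVec (hi.trans hil)] at hi_ker
  · change betaForm (2 * l) (fixedVec l) (repEVec l i m) = 0
    rw [repEVec, if_pos (by lia), betaForm_fixedVec_stdVec (by lia) (by lia), if_neg (by lia)]

lemma IsIsoFlag.isLagrangianFlag (hV : IsIsoFlag (2 * l) l V) :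
    IsLagrangianFlag (betaForm (2 * l)) l V where
  finrank_eq := hV.1
  le_succ k _ := hV.2.1 k
  isLagrangian := isLagrangian_of_two_mul_finrank (nondegenerate_betaForm _) hV.2.2.2
    (by rw [hV.1 l le_rfl, finrank_fin_fun])

lemma InXEven.det_eq_one (hV : InXEven l V) {g : (Fin (2 * l) → ℂ) ≃ₗ[ℂ] (Fin (2 * l) → ℂ)}
    (hg : (betaForm (2 * l)).IsOrthogonal g) (hgV : (stdSub (2 * l) l).map g.toLinearMap = V l) :
    LinearMap.det g.toLinearMap = 1 := by
  have hparity := hV.2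
  rw [(isLagrangian_stdSub l).det_eq_neg_one_pow (isSymm_betaForm _) (nondegenerate_betaForm _) g
    hg, hgV, finrank_stdSub (by lia)]
  exact Even.neg_one_pow (Nat.even_iff.mpr (by lia))

theorem InXEven.inKEvenOrbit_repEFlag_iff (hV : InXEven l V) (hi : 1 ≤ i) (hil : i ≤ l) :
    InKEvenOrbit l (repEFlag l i) V ↔
      ∀ k ≤ l, V k ≤ LinearMap.ker (betaForm (2 * l) (fixedVec l)) ↔ k < i := by
  constructor
  · rintro ⟨g, ⟨⟨-, hg⟩, hgw⟩, rfl⟩ k hk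
    exact (map_le_ker_iff (B := betaForm (2 * l)) hg hgw).trans (repEFlag_le_ker_iff hi hil hk)
  · intro hker
    obtain ⟨g, hg, hgw, hgV⟩ := (isLagrangianFlag_repEFlag hi hil).exists_isOrthogonal_map_eq
      (isSymm_betaForm _) (nondegenerate_betaForm _) hV.1.isLagrangianFlag
      (w := fixedVec l) (by simp [betaForm_fixedVec_self (hi.trans hil)])
      fun k hk ↦ (repEFlag_le_ker_iff hi hil hk).trans (hker k hk).symm
    have hdet := hV.det_eq_one hg (repEFlag_self hi hil ▸ hgV l le_rfl)
    refine ⟨g, ⟨⟨hdet, hg⟩, hgw⟩, funext fun k ↦ ?_⟩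
    rcases le_total k l with hk | hk
    · exact hgV k hk
    · rw [hV.1.2.2.1 k hk, ← hgV l le_rfl, actFlag, repEFlag, isoFlagOf, isoFlagOf, min_self,
        min_eq_right hk]

end EvenOrthogonal

/-- Every flag in `X` is `K`-equivalent to exactly one of the `l` flags `F_1, …, F_l`. -/
theorem stmt_5 (l : ℕ) (hl : 2 ≤ l) (V : ℕ → Submodule ℂ (Fin (2 * l) → ℂ))
    (hV : InXEven l V) :
    ∃! i : ℕ, (1 ≤ i ∧ i ≤ l) ∧ InKEvenOrbit l (repEFlag l i) V := by
  refine (existsUnique_congr fun i ↦ and_congr_right fun hi ↦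
    hV.inKEvenOrbit_repEFlag_iff hi.1 hi.2).mpr ?_
  exact hV.1.isLagrangianFlag.existsUnique_le_ker_iff_lt (isSymm_betaForm _)
    (by simp [betaForm_fixedVec_self (one_le_two.trans hl)])
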